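/- Let S be a Polish space and c : S × S → [0,∞] a lower semicontinuous map. For Borel probability measures μ, ν on S let ℓ(μ,ν) := inf_{π ∈ D(μ,ν)} ∫ c dπ, and let K(μ,ν) := { π ∈ D(μ,ν) : ∫ c dπ = ℓ(μ,ν) }. Then each K(μ,ν) is a nonempty compact subset of P(S × S), and there exists a map (μ,ν) ↦ λ_{μ,ν} from P(S) × P(S) to P(S × S), measurable with respect to the universal completion of the Borel σ-algebra of P(S) × P(S), such that λ_{μ,ν} ∈ K(μ,ν) for all μ, ν; i.e. λ_{μ,ν} is a coupling of μ and ν attaining the infimum ℓ(μ,ν). -/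

import Mathlib

open MeasureTheory ProbabilityTheory ENNReal Set

noncomputable section

/-- The `μ`-completion of the σ-algebra `m`. -/
def muCompletion {α : Type*} (m : MeasurableSpace α) (μ : @Measure α m) : MeasurableSpace α :=
  letI := m
  inferInstanceAs (MeasurableSpace (MeasureTheory.NullMeasurableSpace α μ))

/-- The universal completion of a σ-algebra: the intersection of the `μ`-completions
over all finite nonnegative measures `μ`. -/
def univCompletion {α : Type*} (m : MeasurableSpace α) : MeasurableSpace α :=
  ⨅ (μ : @Measure α m) (_ : @IsFiniteMeasure α m μ), muCompletion m μ

/-- `D(μ,ν)` as a set of probability measures (points of `P(S × S)`). -/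
def CouplingsP {S : Type*} [TopologicalSpace S] [MeasurableSpace S]
    (μ ν : ProbabilityMeasure S) : Set (ProbabilityMeasure (S × S)) :=
  {π | (π : Measure (S × S)).map Prod.fst = (μ : Measure S) ∧
    (π : Measure (S × S)).map Prod.snd = (ν : Measure S)}

/-- The optimal cost `ℓ(μ,ν) = inf_{π ∈ D(μ,ν)} ∫ c dπ`. -/
def optCost {S : Type*} [TopologicalSpace S] [MeasurableSpace S]
    (c : S × S → ℝ≥0∞) (μ ν : ProbabilityMeasure S) : ℝ≥0∞ :=
  ⨅ π ∈ CouplingsP μ ν, ∫⁻ q, c q ∂(π : Measure (S × S))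

/-- `K(μ,ν)`: the set of optimal couplings of `μ` and `ν`. -/
def OptCouplings {S : Type*} [TopologicalSpace S] [MeasurableSpace S]
    (c : S × S → ℝ≥0∞) (μ ν : ProbabilityMeasure S) : Set (ProbabilityMeasure (S × S)) :=
  {π ∈ CouplingsP μ ν | ∫⁻ q, c q ∂(π : Measure (S × S)) = optCost c μ ν}

/-! By the theorem of Prokhorov, the map sending a measure on a product to its marginals is proper.
Hence its fibres `D(μ,ν)` are compact, and since a proper map is closed, the set of `(μ,ν)` for
which `D(μ,ν)` meets a given closed set is closed: `D` is a measurable multifunction. Passing from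
compact sets to the minimizers of a lower semicontinuous function keeps a multifunction compact,
nonempty and measurable. Minimizing first the cost `π ↦ ∫ c dπ` gives `K(μ,ν)`; minimizing then
successively `π ↦ π (U n)`, for open sets `U n` whose measures determine `π`, shrinks `K(μ,ν)` to a
single point, which depends on `(μ,ν)` in a Borel measurable way. -/

open Filter TopologicalSpace

section Minimizers

variable {Y β : Type*} {s C : Set Y}

/-- The set of points of `s` at which `f` attains its minimum over `s`. -/
def minimizers [Preorder β] (f : Y → β) (s : Set Y) : Set Y :=
  {y ∈ s | IsMinOn f s y}

lemma minimizers_subset [Preorder β] (f : Y → β) (s : Set Y) : minimizers f s ⊆ s :=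
  sep_subset _ _

lemma minimizers_eq_inter_preimage_Iic [Preorder β] {f : Y → β} {y : Y}
    (hy : y ∈ minimizers f s) : minimizers f s = s ∩ f ⁻¹' Iic (f y) :=
  Subset.antisymm (fun _ hz => ⟨hz.1, hz.2 hy.1⟩)
    fun _ hz => ⟨hz.1, fun _ hw => hz.2.trans (hy.2 hw)⟩

/-- Successive minimization: starting from `s`, minimize `f 0`, then `f 1` among the minimizers
of `f 0`, and so on. The `n`-th set has been minimized for `f 0, …, f (n - 1)`. -/
def iteratedMinimizers [Preorder β] (f : ℕ → Y → β) (s : Set Y) : ℕ → Set Y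
  | 0 => s
  | n + 1 => minimizers (f n) (iteratedMinimizers f s n)

lemma eq_of_mem_iteratedMinimizers [PartialOrder β] {f : ℕ → Y → β}
    (hsep : ∀ y z, (∀ n, f n y = f n z) → y = z) {y z : Y}
    (hy : ∀ n, y ∈ iteratedMinimizers f s n) (hz : ∀ n, z ∈ iteratedMinimizers f s n) : y = z :=
  hsep y z fun n => le_antisymm ((hy (n + 1)).2 (hz n)) ((hz (n + 1)).2 (hy n))

variable [TopologicalSpace Y] [LinearOrder β]

lemma nonempty_minimizers {f : Y → β} (hs : IsCompact s) (hne : s.Nonempty)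
    (hf : LowerSemicontinuous f) : (minimizers f s).Nonempty :=
  (hf.lowerSemicontinuousOn s).exists_isMinOn hne hs

lemma isCompact_minimizers {f : Y → β} (hs : IsCompact s) (hf : LowerSemicontinuous f) :
    IsCompact (minimizers f s) := by
  rcases (minimizers f s).eq_empty_or_nonempty with hempty | ⟨y, hy⟩
  · exact hempty ▸ isCompact_empty
  · rw [minimizers_eq_inter_preimage_Iic hy]
    exact hs.inter_right (hf.isClosed_preimage _)

lemma nonempty_minimizers_inter_iff [TopologicalSpace β] [OrderTopology β] [DenselyOrdered β]
    {f : Y → β} {D : Set β} (hD : Dense D) (hs : IsCompact s) (hC : IsClosed C)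
    (hf : LowerSemicontinuous f) :
    (minimizers f s ∩ C).Nonempty ↔ (s ∩ C).Nonempty ∧
      ∀ q ∈ D, (s ∩ f ⁻¹' Iic q).Nonempty → (s ∩ (C ∩ f ⁻¹' Iic q)).Nonempty := by
  constructor
  · rintro ⟨y, ⟨hys, hmin⟩, hyC⟩
    exact ⟨⟨y, hys, hyC⟩, fun q _ ⟨z, hzs, hzq⟩ => ⟨y, hys, hyC, (hmin hzs).trans hzq⟩⟩
  · rintro ⟨hne, hlevel⟩
    obtain ⟨y, ⟨hys, hyC⟩, hmin⟩ := nonempty_minimizers (hs.inter_right hC) hne hf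
    refine ⟨y, ⟨hys, fun z hz => ?_⟩, hyC⟩
    by_contra hzy
    obtain ⟨q, hqD, hzq, hqy⟩ := hD.exists_between (not_le.1 hzy)
    obtain ⟨w, hws, hwC, hwq⟩ := hlevel q hqD ⟨z, hz, hzq.le⟩
    exact (hwq.trans_lt hqy).not_ge (hmin ⟨hws, hwC⟩)

variable {f : ℕ → Y → β}

lemma isCompact_iteratedMinimizers (hs : IsCompact s) (hf : ∀ n, LowerSemicontinuous (f n)) :
    ∀ n, IsCompact (iteratedMinimizers f s n)
  | 0 => hs
  | n + 1 => isCompact_minimizers (isCompact_iteratedMinimizers hs hf n) (hf n)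

lemma nonempty_iteratedMinimizers (hs : IsCompact s) (hne : s.Nonempty)
    (hf : ∀ n, LowerSemicontinuous (f n)) : ∀ n, (iteratedMinimizers f s n).Nonempty
  | 0 => hne
  | n + 1 => nonempty_minimizers (isCompact_iteratedMinimizers hs hf n)
      (nonempty_iteratedMinimizers hs hne hf n) (hf n)

lemma nonempty_iInter_iteratedMinimizers_inter [T2Space Y] (hs : IsCompact s)
    (hf : ∀ n, LowerSemicontinuous (f n)) (hC : IsClosed C)
    (hne : ∀ n, (iteratedMinimizers f s n ∩ C).Nonempty) :
    (⋂ n, iteratedMinimizers f s n ∩ C).Nonempty :=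
  IsCompact.nonempty_iInter_of_sequence_nonempty_isCompact_isClosed _
    (fun _ => inter_subset_inter_left _ (minimizers_subset _ _)) hne (hs.inter_right hC)
    fun n => (isCompact_iteratedMinimizers hs hf n).isClosed.inter hC

end Minimizers

section MeasurableMultifunction

variable {X Y β : Type*} [MeasurableSpace X] [TopologicalSpace Y] {K : X → Set Y}

/-- A multifunction `K` from `X` to `Y` is measurable if for every closed `C` the set of `x` such
that `K x` meets `C` is measurable. (Some authors test against open sets instead.) -/
def MeasurableMultifunction (K : X → Set Y) : Prop :=
  ∀ C : Set Y, IsClosed C → MeasurableSet {x | (K x ∩ C).Nonempty}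

lemma measurableMultifunction_preimage_singleton [TopologicalSpace X] [OpensMeasurableSpace X]
    {F : Y → X} (hF : IsClosedMap F) : MeasurableMultifunction fun x => F ⁻¹' {x} := by
  intro C hC
  have hit_eq_image : {x | (F ⁻¹' {x} ∩ C).Nonempty} = F '' C := by
    ext x
    exact exists_congr fun y => and_comm
  rw [hit_eq_image]
  exact (hF C hC).measurableSet

variable [LinearOrder β] [TopologicalSpace β] [OrderTopology β] [DenselyOrdered β]
  [SeparableSpace β]

lemma MeasurableMultifunction.minimizers (hK : MeasurableMultifunction K)
    (hcpt : ∀ x, IsCompact (K x)) {f : Y → β} (hf : LowerSemicontinuous f) :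
    MeasurableMultifunction fun x => minimizers f (K x) := by
  intro C hC
  obtain ⟨D, hDc, hD⟩ := exists_countable_dense β
  have hIic := hf.isClosed_preimage
  simp only [nonempty_minimizers_inter_iff hD (hcpt _) hC hf, ofPred_and, ofPred_forall]
  exact (hK C hC).inter <| .biInter hDc fun q _ => (hK _ (hIic q)).imp (hK _ (hC.inter (hIic q)))

lemma MeasurableMultifunction.iteratedMinimizers (hK : MeasurableMultifunction K)
    (hcpt : ∀ x, IsCompact (K x)) {f : ℕ → Y → β} (hf : ∀ n, LowerSemicontinuous (f n)) :
    ∀ n, MeasurableMultifunction fun x => iteratedMinimizers f (K x) n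
  | 0 => hK
  | n + 1 => (hK.iteratedMinimizers hcpt hf n).minimizers
      (fun x => isCompact_iteratedMinimizers (hcpt x) hf n) (hf n)

theorem exists_measurable_selection_of_isCompact [T2Space Y] [MeasurableSpace Y] [BorelSpace Y]
    (hK : MeasurableMultifunction K) (hcpt : ∀ x, IsCompact (K x))
    (hne : ∀ x, (K x).Nonempty) {f : ℕ → Y → β} (hf : ∀ n, LowerSemicontinuous (f n))
    (hsep : ∀ y z, (∀ n, f n y = f n z) → y = z) :
    ∃ g : X → Y, Measurable g ∧ ∀ x, g x ∈ K x := by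
  have hex (x : X) : ∃ y, ∀ n, y ∈ iteratedMinimizers f (K x) n := by
    simpa only [inter_univ, Set.Nonempty, mem_iInter] using
      nonempty_iInter_iteratedMinimizers_inter (hcpt x) hf isClosed_univ
        (by simpa only [inter_univ] using nonempty_iteratedMinimizers (hcpt x) (hne x) hf)
  choose g hg using hex
  refine ⟨g, measurable_of_isClosed fun C hC => ?_, fun x => hg x 0⟩
  have preimage_eq :
      g ⁻¹' C = ⋂ n, {x | (iteratedMinimizers f (K x) n ∩ C).Nonempty} := by
    ext x
    rw [mem_iInter]
    refine ⟨fun hx n => ⟨g x, hg x n, hx⟩, fun hmeets => ?_⟩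
    obtain ⟨y, hy⟩ := nonempty_iInter_iteratedMinimizers_inter (hcpt x) hf hC hmeets
    rw [mem_iInter] at hy
    have y_eq : y = g x :=
      eq_of_mem_iteratedMinimizers hsep (fun n => (hy n).1) (hg x)
    rw [mem_preimage, ← y_eq]
    exact (hy 0).2
  rw [preimage_eq]
  exact .iInter fun n => hK.iteratedMinimizers hcpt hf n C hC

end MeasurableMultifunction

section LowerSemicontinuousIntegral

lemma volume_restrict_Ioi_ofReal_lt (a : ℝ≥0∞) :
    volume.restrict (Ioi (0 : ℝ)) {t | ENNReal.ofReal t < a} = a := by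
  rw [Measure.restrict_apply (measurableSet_lt ENNReal.measurable_ofReal measurable_const)]
  rcases eq_or_ne a ∞ with rfl | ha
  · simp
  · have : {t | ENNReal.ofReal t < a} ∩ Ioi 0 = Ioo 0 a.toReal := by
      ext t
      rw [mem_inter_iff, and_comm]
      exact and_congr_right fun ht => ENNReal.ofReal_lt_iff_lt_toReal (le_of_lt ht) ha
    rw [this, Real.volume_Ioo, sub_zero, ENNReal.ofReal_toReal ha]

lemma lintegral_eq_lintegral_measure_ofReal_lt {Ω : Type*} [MeasurableSpace Ω] (μ : Measure Ω)
    [SFinite μ] {c : Ω → ℝ≥0∞} (hc : Measurable c) :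
    ∫⁻ x, c x ∂μ = ∫⁻ t in Ioi (0 : ℝ), μ {x | ENNReal.ofReal t < c x} := by
  have hgraph : MeasurableSet {p : Ω × ℝ | ENNReal.ofReal p.2 < c p.1} :=
    measurableSet_lt (by fun_prop) (by fun_prop)
  calc ∫⁻ x, c x ∂μ
      = ∫⁻ x, volume.restrict (Ioi (0 : ℝ)) {t | ENNReal.ofReal t < c x} ∂μ := by
        simp only [volume_restrict_Ioi_ofReal_lt]
    _ = (μ.prod (volume.restrict (Ioi 0))) {p | ENNReal.ofReal p.2 < c p.1} :=
        (Measure.prod_apply hgraph).symm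
    _ = ∫⁻ t in Ioi (0 : ℝ), μ {x | ENNReal.ofReal t < c x} :=
        Measure.prod_apply_symm hgraph

lemma lowerSemicontinuous_lintegral_of_forall {P T : Type*} [TopologicalSpace P]
    [SequentialSpace P] [MeasurableSpace T] (τ : Measure T) {g : P → T → ℝ≥0∞}
    (hmeas : ∀ p, Measurable (g p)) (hlsc : ∀ t, LowerSemicontinuous fun p => g p t) :
    LowerSemicontinuous fun p => ∫⁻ t, g p t ∂τ := by
  refine lowerSemicontinuous_iff_isClosed_preimage.2 fun a =>
    IsSeqClosed.isClosed fun u p hu hlim => ?_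
  calc ∫⁻ t, g p t ∂τ
      ≤ ∫⁻ t, liminf (fun n => g (u n) t) atTop ∂τ :=
        lintegral_mono fun t => ((hlsc t).le_liminf p).trans (liminf_le_liminf_of_le hlim)
    _ ≤ liminf (fun n => ∫⁻ t, g (u n) t ∂τ) atTop := lintegral_liminf_le fun n => hmeas (u n)
    _ ≤ a := liminf_le_of_le (by isBoundedDefault) fun b hb =>
        let ⟨n, hn⟩ := hb.exists
        hn.trans (hu n)

variable {Ω : Type*} [TopologicalSpace Ω] [MeasurableSpace Ω] [OpensMeasurableSpace Ω]

lemma lowerSemicontinuous_measure_of_isOpen [HasOuterApproxClosed Ω] {U : Set Ω} (hU : IsOpen U) :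
    LowerSemicontinuous fun π : ProbabilityMeasure Ω => (π : Measure Ω) U :=
  lowerSemicontinuous_iff_le_liminf.2 fun _ =>
    ProbabilityMeasure.le_liminf_measure_open_of_tendsto tendsto_id hU

theorem lowerSemicontinuous_lintegral_probabilityMeasure [PseudoMetrizableSpace Ω]
    [SeparableSpace Ω] {c : Ω → ℝ≥0∞} (hc : LowerSemicontinuous c) :
    LowerSemicontinuous fun π : ProbabilityMeasure Ω => ∫⁻ x, c x ∂(π : Measure Ω) := by
  simp only [lintegral_eq_lintegral_measure_ofReal_lt _ hc.measurable]
  refine lowerSemicontinuous_lintegral_of_forall _ (fun π => Antitone.measurable ?_)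
    fun t => lowerSemicontinuous_measure_of_isOpen (hc.isOpen_preimage _)
  exact fun s t hst => measure_mono fun x hx => (ENNReal.ofReal_le_ofReal hst).trans_lt hx

end LowerSemicontinuousIntegral

section SeparatingOpenSets

lemma ext_of_generateFrom_of_biInter {Ω : Type*} [mΩ : MeasurableSpace Ω] {b : Set (Set Ω)}
    (hb : mΩ = .generateFrom b) {μ ν : Measure Ω} [IsFiniteMeasure μ]
    (h : ∀ F : Finset b, μ (⋂ s ∈ F, s) = ν (⋂ s ∈ F, s)) : μ = ν := by
  refine ext_of_generate_finite (piiUnionInter (fun s : b => {(s : Set Ω)}) univ) ?_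
    (isPiSystem_piiUnionInter _ (fun s => .singleton _) univ) ?_ (by simpa using h ∅)
  · rw [generateFrom_piiUnionInter_singleton_left, hb]
    simp
  · rw [piiUnionInter_singleton_left]
    rintro _ ⟨F, -, rfl⟩
    exact h F

lemma exists_seq_isOpen_separating_measures (Ω : Type*) [TopologicalSpace Ω]
    [SecondCountableTopology Ω] [MeasurableSpace Ω] [BorelSpace Ω] :
    ∃ U : ℕ → Set Ω, (∀ n, IsOpen (U n)) ∧
      ∀ (μ ν : Measure Ω) [IsFiniteMeasure μ], (∀ n, μ (U n) = ν (U n)) → μ = ν := by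
  have : Countable (countableBasis Ω) := (countable_countableBasis Ω).to_subtype
  obtain ⟨F, hF⟩ := exists_surjective_nat (Finset (countableBasis Ω))
  refine ⟨fun n => ⋂ s ∈ F n, s, fun n => isOpen_biInter_finset fun s _ =>
    isOpen_of_mem_countableBasis s.2, fun μ ν _ h => ?_⟩
  exact ext_of_generateFrom_of_biInter
    (BorelSpace.measurable_eq.trans (isBasis_countableBasis Ω).borel_eq_generateFrom)
    (hF.forall.2 h)

end SeparatingOpenSets

section Marginals

variable {X Y : Type*} [MeasurableSpace X] [MeasurableSpace Y]

/-- The pair of marginals of a probability measure on a product, so that the set of couplings of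
`μ` and `ν` is the fibre of `marginals` over `(μ, ν)`. -/
def marginals (π : ProbabilityMeasure (X × Y)) : ProbabilityMeasure X × ProbabilityMeasure Y :=
  (π.map measurable_fst.aemeasurable, π.map measurable_snd.aemeasurable)

lemma surjective_marginals : Function.Surjective (marginals (X := X) (Y := Y)) :=
  fun p => ⟨p.1.prod p.2, Prod.ext (p.1.map_fst_prod p.2) (p.1.map_snd_prod p.2)⟩

variable [TopologicalSpace X] [BorelSpace X] [TopologicalSpace Y] [BorelSpace Y]

lemma continuous_marginals [SecondCountableTopologyEither X Y] :
    Continuous (marginals (X := X) (Y := Y)) :=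
  (ProbabilityMeasure.continuous_map continuous_fst).prodMk
    (ProbabilityMeasure.continuous_map continuous_snd)

variable [PolishSpace X] [PolishSpace Y]

lemma isTightMeasureSet_of_isCompact {A : Set (ProbabilityMeasure X)} (hA : IsCompact A) :
    IsTightMeasureSet ((fun μ : ProbabilityMeasure X => (μ : Measure X)) '' A) := by
  let := upgradeIsCompletelyMetrizable X
  exact isTightMeasureSet_of_isCompact_closure hA.closure

lemma isCompact_preimage_marginals {A : Set (ProbabilityMeasure X × ProbabilityMeasure Y)}
    (hA : IsCompact A) : IsCompact (marginals ⁻¹' A) := by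
  have tight : IsTightMeasureSet
      ((fun π : ProbabilityMeasure (X × Y) => (π : Measure (X × Y))) '' (marginals ⁻¹' A)) := by
    refine .prodMk
      ((isTightMeasureSet_of_isCompact (hA.image continuous_fst)).subset ?_)
      ((isTightMeasureSet_of_isCompact (hA.image continuous_snd)).subset ?_)
    · rintro _ ⟨_, ⟨π, hπ, rfl⟩, rfl⟩
      exact ⟨(marginals π).1, mem_image_of_mem _ hπ, rfl⟩
    · rintro _ ⟨_, ⟨π, hπ, rfl⟩, rfl⟩
      exact ⟨(marginals π).2, mem_image_of_mem _ hπ, rfl⟩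
  have := isCompact_closure_of_isTightMeasureSet tight
  rwa [(hA.isClosed.preimage continuous_marginals).closure_eq] at this

theorem isProperMap_marginals : IsProperMap (marginals (X := X) (Y := Y)) :=
  isProperMap_iff_isCompact_preimage.2
    ⟨continuous_marginals, fun _ => isCompact_preimage_marginals⟩

end Marginals

lemma le_univCompletion {α : Type*} (m : MeasurableSpace α) : m ≤ univCompletion m :=
  le_iInf₂ fun _ _ _ hs => hs.nullMeasurableSet

section Coupling

variable {S : Type*} [TopologicalSpace S] [MeasurableSpace S]

lemma couplingsP_eq_preimage_marginals (μ ν : ProbabilityMeasure S) :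
    CouplingsP μ ν = marginals ⁻¹' {(μ, ν)} := by
  ext π
  refine ⟨fun hπ => Prod.ext (Subtype.ext hπ.1) (Subtype.ext hπ.2), fun hπ => ⟨?_, ?_⟩⟩
  · exact congrArg (fun p => (p.1 : Measure S)) hπ
  · exact congrArg (fun p => (p.2 : Measure S)) hπ

lemma optCouplings_eq_minimizers (c : S × S → ℝ≥0∞) (μ ν : ProbabilityMeasure S) :
    OptCouplings c μ ν = minimizers (fun π : ProbabilityMeasure (S × S) =>
      ∫⁻ q, c q ∂(π : Measure (S × S))) (marginals ⁻¹' {(μ, ν)}) := by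
  rw [← couplingsP_eq_preimage_marginals]
  ext π
  refine and_congr_right fun hπ => ⟨fun hopt ρ hρ => ?_, fun hmin => ?_⟩
  · exact hopt.trans_le (iInf₂_le ρ hρ)
  · exact le_antisymm (le_iInf₂ fun ρ hρ => hmin hρ) (iInf₂_le π hπ)

end Coupling

theorem measurable_selection_optimal_couplings_general
    {X Y : Type*} [TopologicalSpace X] [PolishSpace X] [MeasurableSpace X] [BorelSpace X]
    [TopologicalSpace Y] [PolishSpace Y] [MeasurableSpace Y] [BorelSpace Y]
    {c : X × Y → ℝ≥0∞} (hc : LowerSemicontinuous c) :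
    let K (p : ProbabilityMeasure X × ProbabilityMeasure Y) : Set (ProbabilityMeasure (X × Y)) :=
      minimizers (fun π => ∫⁻ q, c q ∂(π : Measure (X × Y))) (marginals ⁻¹' {p})
    (∀ p, (K p).Nonempty ∧ IsCompact (K p)) ∧
      ∃ lam : ProbabilityMeasure X × ProbabilityMeasure Y → ProbabilityMeasure (X × Y),
        Measurable[borel _, borel _] lam ∧ ∀ p, lam p ∈ K p := by
  intro K
  have cost_lsc := lowerSemicontinuous_lintegral_probabilityMeasure hc
  have fiber_compact (p) : IsCompact (marginals (X := X) (Y := Y) ⁻¹' {p}) :=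
    isCompact_preimage_marginals isCompact_singleton
  have K_nonempty (p) : (K p).Nonempty :=
    nonempty_minimizers (fiber_compact p) (surjective_marginals p) cost_lsc
  have K_compact (p) : IsCompact (K p) := isCompact_minimizers (fiber_compact p) cost_lsc
  refine ⟨fun p => ⟨K_nonempty p, K_compact p⟩, ?_⟩
  borelize (ProbabilityMeasure X × ProbabilityMeasure Y) (ProbabilityMeasure (X × Y))
  have K_measurable : MeasurableMultifunction K :=
    (measurableMultifunction_preimage_singleton isProperMap_marginals.isClosedMap).minimizers
      fiber_compact cost_lsc
  obtain ⟨U, U_open, U_sep⟩ := exists_seq_isOpen_separating_measures (X × Y)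
  exact exists_measurable_selection_of_isCompact K_measurable K_compact K_nonempty
    (fun n => lowerSemicontinuous_measure_of_isOpen (U_open n))
    fun π ρ h => Subtype.ext (U_sep π ρ h)

/-- **Measurable selection of optimal couplings**: for a lower semicontinuous cost
`c : S × S → [0,∞]`, each set `K(μ,ν)` of optimal couplings is nonempty and compact in
`P(S × S)`, and there is a selection `(μ,ν) ↦ λ_{μ,ν} ∈ K(μ,ν)` which is measurable for
the universal completion of the Borel σ-algebra of `P(S) × P(S)`. -/
theorem measurable_selection_optimal_couplings
    {S : Type*} [TopologicalSpace S] [PolishSpace S] [MeasurableSpace S] [BorelSpace S]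
    (c : S × S → ℝ≥0∞) (hc : LowerSemicontinuous c) :
    (∀ μ ν : ProbabilityMeasure S,
      (OptCouplings c μ ν).Nonempty ∧ IsCompact (OptCouplings c μ ν)) ∧
    ∃ lam : ProbabilityMeasure S × ProbabilityMeasure S → ProbabilityMeasure (S × S),
      (@Measurable (ProbabilityMeasure S × ProbabilityMeasure S) (ProbabilityMeasure (S × S))
        (univCompletion (borel (ProbabilityMeasure S × ProbabilityMeasure S)))
        (borel (ProbabilityMeasure (S × S))) lam) ∧
      ∀ μ ν : ProbabilityMeasure S, lam (μ, ν) ∈ OptCouplings c μ ν := by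
  simp only [optCouplings_eq_minimizers]
  obtain ⟨hK, lam, hmeas, hmem⟩ := measurable_selection_optimal_couplings_general hc
  exact ⟨fun μ ν => hK (μ, ν), lam, hmeas.mono (le_univCompletion _) le_rfl,
    fun μ ν => hmem (μ, ν)⟩

end
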